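/- arXiv:2402.09383 — 2 statements merged into one kernel-verified Lean document; each statement's English description precedes it below -/
import Mathlib

section
/- Let H be a subgroup of G and let g₁, g₂ ∈ G \ H with Hg₁ = Hg₂ but g₁H ≠ g₂H. Then the vertices (e,e) and (g₁,g₂) of Γ_H(G) are non-adjacent and have exactly 4 common neighbours, namely (g₁,e), (g₂⁻¹g₁,e), (e,g₂) and (e,g₁⁻¹g₂). -/
/-!
The neighbours of `(e,e)` are exactly the elements of `S`, since `H` is closed under inverses, so
there are three cases for a common neighbour `w`. If `w = (a,e)` with `a ∉ H`, then
`(g₁a⁻¹, g₂) ∈ S` with `g₂ ≠ e`, which forces `a = g₁` or `a = g₂⁻¹g₁`; the latter lies outside `H`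
exactly because `g₁H ≠ g₂H`. The case `w = (e,b)` is symmetric. If `w = (a,a)`, then
`(g₁a⁻¹, g₂a⁻¹) ∈ S` forces either `g₁ = g₂`, contradicting `g₁H ≠ g₂H`, or `a ∈ {g₁, g₂}` together
with `g₁g₂⁻¹ ∉ H` or `g₂g₁⁻¹ ∉ H`, contradicting `Hg₁ = Hg₂`.
-/

open Pointwise

variable {G : Type*}

/-- The connection set `S = {(g,e),(e,g),(g,g) : g ∈ G \ H}` (as a predicate). -/
def inS [Group G] (H : Subgroup G) (p : G × G) : Prop :=
  (p.1 ∉ H ∧ p.2 = 1) ∨ (p.1 = 1 ∧ p.2 ∉ H) ∨ (p.1 = p.2 ∧ p.1 ∉ H)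

/-- Adjacency in the Cayley graph `Γ_H(G)` on `G × G`: distinct vertices
`(g₁,g₂)`, `(g₃,g₄)` are adjacent iff `(g₁g₃⁻¹, g₂g₄⁻¹) ∈ S`. -/
def gAdj [Group G] (H : Subgroup G) (u v : G × G) : Prop :=
  u ≠ v ∧ inS H (u.1 * v.1⁻¹, u.2 * v.2⁻¹)

/-- The set of common neighbours of `u` and `v` in `Γ_H(G)`. -/
def commonNbrs [Group G] (H : Subgroup G) (u v : G × G) : Set (G × G) :=
  {w | gAdj H u w ∧ gAdj H v w}

/-- The left coset `gH`. -/
def leftCoset' [Group G] (H : Subgroup G) (g : G) : Set G := {x | g⁻¹ * x ∈ H}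

/-- The right coset `Hg`. -/
def rightCoset' [Group G] (H : Subgroup G) (g : G) : Set G := {x | x * g⁻¹ ∈ H}

theorem rightCoset'_eq_imp [Group G] {H : Subgroup G} {a b : G}
    (h : rightCoset' H a = rightCoset' H b) : a * b⁻¹ ∈ H := by
  have ha : a ∈ rightCoset' H a := by simp [rightCoset', H.one_mem]
  rw [h] at ha
  exact ha

theorem leftCoset'_eq_of [Group G] {H : Subgroup G} {a b : G}
    (h : a⁻¹ * b ∈ H) : leftCoset' H a = leftCoset' H b := by
  ext x
  change a⁻¹ * x ∈ H ↔ b⁻¹ * x ∈ H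
  have e : a⁻¹ * x = (a⁻¹ * b) * (b⁻¹ * x) := by group
  rw [e]
  exact H.mul_mem_cancel_left h

/-- The requirement `u ≠ v` is automatic, because `(e,e) ∉ S`. -/
theorem gAdj_iff_inS [Group G] {H : Subgroup G} (u v : G × G) :
    gAdj H u v ↔ inS H (u.1 * v.1⁻¹, u.2 * v.2⁻¹) := by
  refine ⟨fun h => h.2, fun h => ⟨?_, h⟩⟩
  rintro rfl
  simp [inS, H.one_mem] at h

theorem gAdj_one_iff [Group G] {H : Subgroup G} (a b : G) :
    gAdj H (1, 1) (a, b) ↔ inS H (a, b) := by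
  simp [gAdj_iff_inS, inS]

/-- If `g₁, g₂ ∈ G \ H` with `Hg₁ = Hg₂` but `g₁H ≠ g₂H`, then `(e,e)` and `(g₁,g₂)`
are non-adjacent and have exactly `4` common neighbours, namely `(g₁,e)`, `(g₂⁻¹g₁,e)`,
`(e,g₂)` and `(e,g₁⁻¹g₂)`. -/
theorem stmt_5 [Group G] [Fintype G] (hG : 5 ≤ Nat.card G) (H : Subgroup G)
    (g₁ g₂ : G) (h₁ : g₁ ∉ H) (h₂ : g₂ ∉ H)
    (hR : rightCoset' H g₁ = rightCoset' H g₂) (hL : leftCoset' H g₁ ≠ leftCoset' H g₂) :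
    ¬ gAdj H (1, 1) (g₁, g₂) ∧
    commonNbrs H (1, 1) (g₁, g₂) = {(g₁, 1), (g₂⁻¹ * g₁, 1), (1, g₂), (1, g₁⁻¹ * g₂)} ∧
    (commonNbrs H (1, 1) (g₁, g₂)).ncard = 4 := by
  have hr : g₁ * g₂⁻¹ ∈ H := rightCoset'_eq_imp hR
  have hr' : g₂ * g₁⁻¹ ∈ H := by simpa using H.inv_mem hr
  have hl : g₁⁻¹ * g₂ ∉ H := fun h => hL (leftCoset'_eq_of h)
  have hl' : g₂⁻¹ * g₁ ∉ H := fun h => hL (leftCoset'_eq_of h).symm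
  have n₁ : g₁ ≠ 1 := fun h => h₁ (h ▸ H.one_mem)
  have n₂ : g₂ ≠ 1 := fun h => h₂ (h ▸ H.one_mem)
  have n₁₂ : g₁ ≠ g₂ := fun h => hL (congrArg _ h)
  have hset : commonNbrs H (1, 1) (g₁, g₂) =
      {(g₁, 1), (g₂⁻¹ * g₁, 1), (1, g₂), (1, g₁⁻¹ * g₂)} := by
    ext ⟨a, b⟩
    simp only [commonNbrs, Set.mem_ofPred_eq, gAdj_one_iff, Set.mem_insert_iff,
      Set.mem_singleton_iff, Prod.mk.injEq]
    rw [gAdj_iff_inS]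
    constructor
    · rintro ⟨⟨ha, rfl⟩ | ⟨rfl, hb⟩ | ⟨hab, ha⟩, hS⟩
      · rcases hS with ⟨-, h⟩ | ⟨h, -⟩ | ⟨h, -⟩
        · exact absurd (by simpa using h) n₂
        · exact Or.inl ⟨(mul_inv_eq_one.mp h).symm, rfl⟩
        · refine Or.inr (Or.inl ⟨?_, rfl⟩)
          simp only [inv_one, mul_one] at h
          rw [← h]
          group
      · rcases hS with ⟨-, h⟩ | ⟨h, -⟩ | ⟨h, -⟩
        · exact Or.inr (Or.inr (Or.inl ⟨rfl, (mul_inv_eq_one.mp h).symm⟩))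
        · exact absurd (by simpa using h) n₁
        · refine Or.inr (Or.inr (Or.inr ⟨rfl, ?_⟩))
          simp only [inv_one, mul_one] at h
          rw [h]
          group
      · obtain rfl : a = b := hab
        rcases hS with ⟨hn, h⟩ | ⟨h, hn⟩ | ⟨h, -⟩
        · obtain rfl : g₂ = a := mul_inv_eq_one.mp h
          exact absurd hr hn
        · obtain rfl : g₁ = a := mul_inv_eq_one.mp h
          exact absurd hr' hn
        · exact absurd (mul_right_cancel h) n₁₂
    · rintro (⟨rfl, rfl⟩ | ⟨rfl, rfl⟩ | ⟨rfl, rfl⟩ | ⟨rfl, rfl⟩) <;> simp [inS, *]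
  refine ⟨?_, hset, ?_⟩
  · simp [gAdj_one_iff, inS, n₁, n₂, n₁₂]
  · have n₃ : g₂⁻¹ * g₁ ≠ 1 := fun h => hl' (h ▸ H.one_mem)
    have n₄ : g₁ ≠ g₂⁻¹ * g₁ := by simpa using n₂
    have n₅ : g₂ ≠ g₁⁻¹ * g₂ := by simpa using n₁
    rw [hset, Set.ncard_insert_of_notMem, Set.ncard_insert_of_notMem, Set.ncard_pair]
    · simp [n₅]
    · simp only [Set.mem_insert_iff, Set.mem_singleton_iff, Prod.mk.injEq, n₃, false_and,
        or_self, not_false_eq_true]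
    · simp only [Set.mem_insert_iff, Set.mem_singleton_iff, Prod.mk.injEq, n₁, n₄, false_and,
        or_self, not_false_eq_true]
end

section
/- Let H be a nontrivial proper subgroup of G with [G : H] = 2. Then the set of numbers of common neighbours over all pairs of distinct non-adjacent vertices of Γ_H(G), i.e., { n : n = number of common neighbours of u and v for some distinct non-adjacent vertices u, v of Γ_H(G) }, equals {0, 2, |G| - |H|}. -/
/-!
The graph is a Cayley graph, so the number of common neighbours of `u` and `v` depends only on
`x = u v⁻¹ = (a, b)`: it is the number of `s ∈ S` with `x⁻¹ s ∈ S` (`ncard_commonNbrs`). Distinct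
non-adjacent vertices correspond to `x ≠ 1`, `x ∉ S`. Membership in a subgroup of index two is a
parity, and splitting into cases gives the following.

* If `x` is one of `(a, 1)`, `(1, a)`, `(a, a)` with `1 ≠ a ∈ H`, the solutions `s` are exactly the
  elements of `S` of the same shape as `x`, so there are `|G| - |H|` of them.
* If `a`, `b`, `1` are pairwise distinct, then `s` and `x⁻¹ s` lie on two different lines among
  `b = 1`, `a = 1`, `a = b`, and each of the six choices of lines determines `s`. The parities
  of `a` and `b` leave two of these solutions, or none when `a, b ∈ H`.

All three values occur because `|H| = |G| / 2 > 2` provides two distinct nontrivial elements.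
-/

open Pointwise

variable {G : Type*}

/-- The `c`-set of `Γ_H(G)`: the set of all numbers of common neighbours of
pairs of distinct non-adjacent vertices. -/
def cSet [Group G] (H : Subgroup G) : Set ℕ :=
  {n | ∃ u v : G × G, u ≠ v ∧ ¬ gAdj H u v ∧ n = (commonNbrs H u v).ncard}

/-- The elements `s` of the connection set for which `x⁻¹ s` also lies in the connection set, that
is, the ways of writing `x = s t⁻¹` with `s, t ∈ S`. -/
def solSet [Group G] (H : Subgroup G) (x : G × G) : Set (G × G) :=
  {s | inS H s ∧ inS H (x⁻¹ * s)}

lemma not_inS_one [Group G] (H : Subgroup G) : ¬ inS H (1 : G × G) := by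
  simp [inS, H.one_mem]

lemma gAdj_iff [Group G] (H : Subgroup G) (u v : G × G) : gAdj H u v ↔ inS H (u * v⁻¹) := by
  refine ⟨fun h => h.2, fun h => ⟨?_, h⟩⟩
  rintro rfl
  rw [mul_inv_cancel] at h
  exact not_inS_one H h

lemma ncard_commonNbrs [Group G] (H : Subgroup G) (u v : G × G) :
    (commonNbrs H u v).ncard = (solSet H (u * v⁻¹)).ncard := by
  have hinj : Function.Injective (fun w : G × G => u * w⁻¹) := fun w w' h => by simpa using h
  rw [← Set.ncard_image_of_injective _ hinj]
  congr 1
  ext s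
  simp only [Set.mem_image, commonNbrs, solSet, Set.mem_ofPred_eq, gAdj_iff]
  constructor
  · rintro ⟨w, ⟨h1, h2⟩, rfl⟩
    exact ⟨h1, by simpa [mul_assoc] using h2⟩
  · rintro ⟨h1, h2⟩
    exact ⟨s⁻¹ * u, ⟨by simpa using h1, by simpa [mul_assoc] using h2⟩, by simp⟩

/-- By translation, a pair of vertices may be replaced by the quotient `x = u v⁻¹`. -/
lemma mem_cSet_iff [Group G] (H : Subgroup G) (n : ℕ) :
    n ∈ cSet H ↔ ∃ x : G × G, x ≠ 1 ∧ ¬ inS H x ∧ n = (solSet H x).ncard := by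
  constructor
  · rintro ⟨u, v, hne, hadj, rfl⟩
    exact ⟨u * v⁻¹, by rwa [Ne, mul_inv_eq_one], by rwa [← gAdj_iff], ncard_commonNbrs H u v⟩
  · rintro ⟨x, hne, hS, rfl⟩
    exact ⟨x, 1, hne, by simpa [gAdj_iff] using hS, by simp [ncard_commonNbrs]⟩

section Lines

variable [Group G] {H : Subgroup G} {a b : G}

lemma solSet_fst (ha : a ∈ H) (ha1 : a ≠ 1) :
    solSet H (a, 1) = (fun g => (g, 1)) '' (H : Set G)ᶜ := by
  ext ⟨s, t⟩
  simp only [solSet, inS, Set.mem_ofPred_eq, Set.mem_image, Set.mem_compl_iff, SetLike.mem_coe,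
    Prod.mk.injEq, Prod.inv_mk, Prod.mk_mul_mk, inv_one, one_mul,
    H.mul_mem_cancel_left (H.inv_mem ha), inv_mul_eq_one]
  have e : a⁻¹ * s = s ↔ a = 1 := by simp
  constructor
  · rintro ⟨h | h | h, h' | h' | h'⟩ <;> grind [H.one_mem, H.inv_mem ha]
  · grind

lemma solSet_snd (ha : a ∈ H) (ha1 : a ≠ 1) :
    solSet H (1, a) = (fun g => (1, g)) '' (H : Set G)ᶜ := by
  ext ⟨s, t⟩
  simp only [solSet, inS, Set.mem_ofPred_eq, Set.mem_image, Set.mem_compl_iff, SetLike.mem_coe,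
    Prod.mk.injEq, Prod.inv_mk, Prod.mk_mul_mk, inv_one, one_mul,
    H.mul_mem_cancel_left (H.inv_mem ha), inv_mul_eq_one]
  have e : a⁻¹ * t = t ↔ a = 1 := by simp
  constructor
  · rintro ⟨h | h | h, h' | h' | h'⟩ <;> grind [H.one_mem, H.inv_mem ha]
  · grind

lemma solSet_diag (ha : a ∈ H) (ha1 : a ≠ 1) :
    solSet H (a, a) = (fun g => (g, g)) '' (H : Set G)ᶜ := by
  ext ⟨s, t⟩
  simp only [solSet, inS, Set.mem_ofPred_eq, Set.mem_image, Set.mem_compl_iff, SetLike.mem_coe,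
    Prod.mk.injEq, Prod.inv_mk, Prod.mk_mul_mk, mul_right_inj,
    H.mul_mem_cancel_left (H.inv_mem ha), inv_mul_eq_one]
  constructor
  · rintro ⟨h | h | h, h' | h' | h'⟩ <;> grind [H.one_mem, H.inv_mem ha]
  · grind

/-- For `a`, `b`, `1` pairwise distinct, the six candidate solutions, each with the conditions
under which it is one. -/
lemma mem_solSet_generic (ha1 : a ≠ 1) (hb1 : b ≠ 1) (hab : a ≠ b) (hidx : H.index = 2)
    (s : G × G) : s ∈ solSet H (a, b) ↔
      (a ∉ H ∧ b ∉ H ∧ (s = (a, 1) ∨ s = (1, b))) ∨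
      (a ∈ H ∧ b ∉ H ∧ (s = (a * b⁻¹, 1) ∨ s = (b, b))) ∨
      (a ∉ H ∧ b ∈ H ∧ (s = (1, b * a⁻¹) ∨ s = (a, a))) := by
  obtain ⟨s, t⟩ := s
  have h1 := H.one_mem
  have e1 : a⁻¹ * s = b⁻¹ ↔ s = a * b⁻¹ := inv_mul_eq_iff_eq_mul
  have e2 : a⁻¹ = b⁻¹ * t ↔ t = b * a⁻¹ := by rw [eq_comm, inv_mul_eq_iff_eq_mul]
  have e3 : a⁻¹ * s = b⁻¹ * s ↔ a = b := by simp
  have m : ∀ x y : G, x * y ∈ H ↔ (x ∈ H ↔ y ∈ H) := fun _ _ =>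
    Subgroup.mul_mem_iff_of_index_two hidx
  have i : ∀ x : G, x⁻¹ ∈ H ↔ x ∈ H := fun _ => inv_mem_iff
  simp only [solSet, inS, Set.mem_ofPred_eq, Prod.mk.injEq, Prod.inv_mk, Prod.mk_mul_mk,
    inv_mul_eq_one, m, i]
  constructor
  · rintro ⟨⟨h, rfl⟩ | ⟨rfl, h⟩ | ⟨rfl, h⟩, h' | h' | h'⟩ <;>
      grind
  · rintro (⟨ha, hb, ⟨rfl, rfl⟩ | ⟨rfl, rfl⟩⟩ | ⟨ha, hb, ⟨rfl, rfl⟩ | ⟨rfl, rfl⟩⟩ |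
      ⟨ha, hb, ⟨rfl, rfl⟩ | ⟨rfl, rfl⟩⟩) <;> simp [*]

open Classical in
lemma ncard_solSet_generic (ha1 : a ≠ 1) (hb1 : b ≠ 1) (hab : a ≠ b) (hidx : H.index = 2) :
    (solSet H (a, b)).ncard = if a ∈ H ∧ b ∈ H then 0 else 2 := by
  have key := mem_solSet_generic ha1 hb1 hab hidx
  by_cases ha : a ∈ H <;> by_cases hb : b ∈ H <;>
    simp only [ha, hb, not_true, not_false_eq_true, true_and, false_and, and_true, and_false,
      false_or, or_false, iff_false, if_true, if_false] at key ⊢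
  · rw [Set.eq_empty_of_forall_notMem key, Set.ncard_empty]
  · rw [show solSet H (a, b) = {(a * b⁻¹, 1), (b, b)} from Set.ext key,
      Set.ncard_pair (by simp [hb1.symm])]
  · rw [show solSet H (a, b) = {(1, b * a⁻¹), (a, a)} from Set.ext key,
      Set.ncard_pair (by simp [ha1.symm])]
  · rw [show solSet H (a, b) = {(a, 1), (1, b)} from Set.ext key,
      Set.ncard_pair (by simp [ha1])]

end Lines

/-- If `H` is a nontrivial proper subgroup of `G` with `[G:H] = 2`, then the `c`-set
of `Γ_H(G)` equals `{0, 2, |G| - |H|}`. -/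
theorem stmt_6 [Group G] [Fintype G] (hG : 5 ≤ Nat.card G) (H : Subgroup G)
    (hbot : H ≠ ⊥) (htop : H ≠ ⊤) (hidx : H.index = 2) :
    cSet H = {0, 2, Nat.card G - Nat.card H} := by
  have hN : ((H : Set G)ᶜ).ncard = Nat.card G - Nat.card H := Set.ncard_compl (H : Set G)
  have hcard : Nat.card H * 2 = Nat.card G := hidx ▸ H.card_mul_index
  have hfst {a : G} (ha : a ∈ H) (ha1 : a ≠ 1) :
      (solSet H (a, 1)).ncard = Nat.card G - Nat.card H := by
    rw [solSet_fst ha ha1, Set.ncard_image_of_injective _ (Prod.mk_left_injective 1), hN]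
  classical
  ext n
  rw [mem_cSet_iff]
  simp only [Set.mem_insert_iff, Set.mem_singleton_iff]
  constructor
  · rintro ⟨⟨a, b⟩, hne, hS, rfl⟩
    by_cases hb1 : b = 1
    · subst hb1
      have ha1 : a ≠ 1 := by rintro rfl; exact hne rfl
      have ha : a ∈ H := by by_contra h; exact hS (Or.inl ⟨h, rfl⟩)
      exact Or.inr (Or.inr (hfst ha ha1))
    by_cases ha1 : a = 1
    · subst ha1
      have hb : b ∈ H := by by_contra h; exact hS (Or.inr (Or.inl ⟨rfl, h⟩))
      rw [solSet_snd hb hb1, Set.ncard_image_of_injective _ (Prod.mk_right_injective 1), hN]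
      exact Or.inr (Or.inr rfl)
    by_cases hab : a = b
    · subst hab
      have ha : a ∈ H := by by_contra h; exact hS (Or.inr (Or.inr ⟨rfl, h⟩))
      rw [solSet_diag ha ha1,
        Set.ncard_image_of_injective _ (fun _ _ h => congrArg Prod.fst h), hN]
      exact Or.inr (Or.inr rfl)
    rw [ncard_solSet_generic ha1 hb1 hab hidx]
    split_ifs <;> simp
  · have h3 : 2 < (H : Set G).ncard := by
      change 2 < Nat.card H
      omega
    obtain ⟨a, ha, ha1⟩ := Set.exists_ne_of_one_lt_ncard (by omega : 1 < (H : Set G).ncard) 1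
    obtain ⟨b, hb, hb'⟩ := Set.exists_mem_notMem_of_ncard_lt_ncard
      (s := {1, a}) (t := (H : Set G)) (by rwa [Set.ncard_pair ha1.symm])
    simp only [Set.mem_insert_iff, Set.mem_singleton_iff, not_or] at hb'
    obtain ⟨hb1, hba⟩ := hb'
    obtain ⟨c, hc⟩ : ∃ c, c ∉ H := by
      by_contra! h
      exact htop ((Subgroup.eq_top_iff' H).2 h)
    have hc1 : c ≠ 1 := fun h => hc (h ▸ H.one_mem)
    have hac : a ≠ c := fun h => hc (h ▸ ha)
    have ha' : a ∈ H := ha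
    have hb' : b ∈ H := hb
    rintro (rfl | rfl | rfl)
    · refine ⟨(a, b), by simp [ha1], by simp [inS, ha', hb'], ?_⟩
      simp [ncard_solSet_generic ha1 hb1 (Ne.symm hba) hidx, ha', hb']
    · refine ⟨(a, c), by simp [ha1], by simp [inS, ha', ha1], ?_⟩
      simp [ncard_solSet_generic ha1 hc1 hac hidx, hc]
    · exact ⟨(a, 1), by simp [ha1], by simp [inS, ha'], (hfst ha ha1).symm⟩
end
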